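/- arXiv:2204.10311 — 2 statements merged into one kernel-verified Lean document; each statement's English description precedes it below -/
import Mathlib

section
/- Let p ≥ 5 be a prime and q = p^r with r ≥ 1, and let x ∈ F_q with x ≠ 0 and x ≠ 1. Then (1/(q(q−1))) · Σ_χ g(χ)·g(χ²)·g(χ̄³)·χ(−27/(4x)) = 1/q holds if and only if φ(3x(1−x)) = −1, i.e., if and only if 3x(1−x) is a nonsquare in F_q. Here the sum runs over all multiplicative characters χ of F_q. -/
/-!
For multiplicative characters `α`, `β` that are not both trivial,
`g(α) g(β) g((αβ)⁻¹) = (αβ)(-1) q J(α, β)`. With `α = χ` and `β = χ²`, expanding the Jacobi sum and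
summing over `χ`, orthogonality turns the normalized sum into `N - 1 + 1 / q`, where `N` counts the
`s` with `27 s (1 - s)² = 4x` and `1 / q - 1` comes from the exceptional `χ = 1`.

Substituting `s = 4y / 3` gives the equation `P(y) = x`, where `P(y) = y (4y - 3)²` satisfies
`P(cos² θ) = cos² 3θ`. Since `3 P (1 - P)` equals `3 y (1 - y)` times a square, `P` preserves the
set where `3 y (1 - y)` is a nonsquare. The discriminant of the quadratic for the other preimages of
`P(y)` is `3 y (1 - y)` up to a square, so `P` is injective, hence bijective, on this finite set,
while for `y` outside it the fibre through `y` has a second point.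
-/

open Finset

theorem natCast_ne_zero_of_prime_ne {R : Type*} [CommRing R] [IsDomain R] [Fintype R] {p r : ℕ}
    (hp : p.Prime) (hR : Fintype.card R = p ^ r) {ℓ : ℕ} (hℓ : ℓ.Prime) (hne : p ≠ ℓ) :
    (ℓ : R) ≠ 0 := by
  have : Fact p.Prime := ⟨hp⟩
  have : CharP R p := charP_of_card_eq_prime_pow hR
  rwa [Ne, CharP.cast_eq_zero_iff R p, Nat.prime_dvd_prime_iff_eq hp hℓ]

theorem sum_mulChar_apply {M R : Type*} [CommMonoid M] [Finite M] [DecidableEq M] [CommRing R]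
    [IsDomain R] [HasEnoughRootsOfUnity R (Monoid.exponent Mˣ)] [Fintype (MulChar M R)] (b : M) :
    ∑ χ : MulChar M R, χ b = if b = 1 then (Nat.card Mˣ : R) else 0 := by
  split_ifs with hb
  · simp [hb, ← MulChar.card_eq_card_units_of_hasEnoughRootsOfUnity M R]
  · obtain ⟨χ, hχ⟩ := MulChar.exists_apply_ne_one_of_hasEnoughRootsOfUnity M R hb
    refine eq_zero_of_mul_eq_self_left hχ ?_
    simp only [mul_sum, ← MulChar.mul_apply]
    exact Fintype.sum_bijective _ (Group.mulLeft_bijective χ) _ _ fun _ ↦ rfl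

section GaussSum

variable {F R : Type*} [Field F] [Fintype F] [CommRing R] [IsDomain R]

theorem gaussSum_mul_gaussSum_inv {χ : MulChar F R} (hχ : χ ≠ 1) {ψ : AddChar F R}
    (hψ : ψ ≠ 1) :
    gaussSum χ ψ * gaussSum χ⁻¹ ψ = χ (-1) * Fintype.card F := by
  rw [← mul_gaussSum_inv_eq_gaussSum χ⁻¹, mul_left_comm,
    gaussSum_mul_gaussSum_eq_card hχ (.of_ne_one hψ), MulChar.inv_apply', inv_neg_one]

theorem gaussSum_mul_gaussSum_mul_gaussSum_inv_mul {α β : MulChar F R} (hαβ : ¬(α = 1 ∧ β = 1))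
    {ψ : AddChar F R} (hψ : ψ ≠ 1) :
    gaussSum α ψ * gaussSum β ψ * gaussSum (α * β)⁻¹ ψ =
      (α * β) (-1) * Fintype.card F * jacobiSum α β := by
  by_cases h : α * β = 1
  · obtain rfl : β = α⁻¹ := eq_inv_of_mul_eq_one_right h
    have hα : α ≠ 1 := fun hα ↦ hαβ ⟨hα, by rw [hα, inv_one]⟩
    rw [gaussSum_mul_gaussSum_inv hα hψ, h, inv_one, gaussSum_one_left hψ,
      jacobiSum_nontrivial_inv hα, MulChar.one_apply isUnit_one.neg]
    ring
  · rw [← jacobiSum_mul_nontrivial h, mul_right_comm, gaussSum_mul_gaussSum_inv h hψ]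

variable [HasEnoughRootsOfUnity R (Monoid.exponent Fˣ)] [Fintype (MulChar F R)]

theorem sum_jacobiSum_pow_pow_mul_apply [DecidableEq F] {k m : ℕ} (hk : k ≠ 0) (hm : m ≠ 0)
    (a : F) :
    ∑ χ : MulChar F R, jacobiSum (χ ^ k) (χ ^ m) * χ a =
      (Nat.card Fˣ : R) * #{s : F | s ^ k * (1 - s) ^ m * a = 1} := by
  calc
    _ = ∑ s : F, ∑ χ : MulChar F R, χ (s ^ k * (1 - s) ^ m * a) := by
      rw [sum_comm]
      simp only [jacobiSum, sum_mul, MulChar.pow_apply' _ hk, MulChar.pow_apply' _ hm, map_mul,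
        map_pow]
    _ = _ := by
      simp only [sum_mulChar_apply, ← sum_filter, sum_const, nsmul_eq_mul, mul_comm]

theorem sum_gaussSum_pow_mul_gaussSum_pow_mul_gaussSum_inv_pow [DecidableEq F]
    {k m : ℕ} (hk : k ≠ 0) (hm : m ≠ 0) (hkm : k.Coprime m) {ψ : AddChar F R} (hψ : ψ ≠ 1)
    {a : F} (ha : a ≠ 0) :
    ∑ χ : MulChar F R,
        gaussSum (χ ^ k) ψ * gaussSum (χ ^ m) ψ * gaussSum (χ⁻¹ ^ (k + m)) ψ * χ a =
      ((Fintype.card F : R) - 1) *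
        (Fintype.card F * #{s : F | s ^ k * (1 - s) ^ m * ((-1) ^ (k + m) * a) = 1} -
          ((Fintype.card F : R) - 1)) := by
  classical
  have term_eq (χ : MulChar F R) :
      gaussSum (χ ^ k) ψ * gaussSum (χ ^ m) ψ * gaussSum (χ⁻¹ ^ (k + m)) ψ * χ a =
        Fintype.card F * (jacobiSum (χ ^ k) (χ ^ m) * χ ((-1) ^ (k + m) * a)) -
          if χ = 1 then ((Fintype.card F : R) - 1) ^ 2 else 0 := by
    split_ifs with hχ
    · have hunit : IsUnit ((-1) ^ (k + m) * a) := (isUnit_one.neg.pow _).mul ha.isUnit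
      simp only [hχ, one_pow, inv_one, gaussSum_one_left hψ, jacobiSum_one_one,
        MulChar.one_apply ha.isUnit, MulChar.one_apply hunit]
      ring
    · have hχkm : ¬(χ ^ k = 1 ∧ χ ^ m = 1) := fun ⟨h₁, h₂⟩ ↦
        hχ (by simpa only [hkm.gcd_eq_one, pow_one] using pow_gcd_eq_one.mpr ⟨h₁, h₂⟩)
      rw [inv_pow, pow_add, gaussSum_mul_gaussSum_mul_gaussSum_inv_mul hχkm hψ, ← pow_add,
        MulChar.pow_apply' _ (by omega), map_mul, map_pow]
      ring
  have card_units : (Nat.card Fˣ : R) = Fintype.card F - 1 := by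
    rw [Nat.card_eq_fintype_card, Fintype.card_units, Nat.cast_pred Fintype.card_pos]
  simp only [term_eq, sum_sub_distrib, ← mul_sum, sum_jacobiSum_pow_pow_mul_apply hk hm,
    sum_ite_eq', mem_univ, if_true, card_units]
  ring

theorem one_div_mul_sum_gaussSum_eq_one_div_card_iff {K : Type*} [Field K] [CharZero K]
    [HasEnoughRootsOfUnity K (Monoid.exponent Fˣ)] [Fintype (MulChar F K)]
    {k m : ℕ} (hk : k ≠ 0) (hm : m ≠ 0) (hkm : k.Coprime m) {ψ : AddChar F K} (hψ : ψ ≠ 1)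
    {a : F} (ha : a ≠ 0) :
    1 / ((Fintype.card F : K) * (Fintype.card F - 1)) *
        ∑ χ : MulChar F K,
          gaussSum (χ ^ k) ψ * gaussSum (χ ^ m) ψ * gaussSum (χ⁻¹ ^ (k + m)) ψ * χ a =
      1 / Fintype.card F ↔
    ∃! s : F, s ^ k * (1 - s) ^ m * ((-1) ^ (k + m) * a) = 1 := by
  classical
  have hq : (Fintype.card F : K) ≠ 0 := Nat.cast_ne_zero.mpr Fintype.card_ne_zero
  have hq1 : (Fintype.card F : K) - 1 ≠ 0 :=
    sub_ne_zero.mpr (Nat.cast_ne_one.mpr Fintype.one_lt_card.ne')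
  have normalized (N : K) : 1 / ((Fintype.card F : K) * (Fintype.card F - 1)) *
      ((Fintype.card F - 1) * (Fintype.card F * N - (Fintype.card F - 1))) =
        N - 1 + 1 / Fintype.card F := by
    field_simp
    ring
  rw [sum_gaussSum_pow_mul_gaussSum_pow_mul_gaussSum_inv_pow hk hm hkm hψ ha, normalized,
    add_eq_right, sub_eq_zero, Nat.cast_eq_one, Fintype.existsUnique_iff_card_one]

end GaussSum

/-- The polynomial map with `cosSqTriple (cos² θ) = cos² (3θ)`, that is, the square of the Chebyshev
polynomial `T₃` in the variable `y = cos² θ`. It puts the cubic equation of the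
character sum in the form `cosSqTriple y = x`. -/
def cosSqTriple {R : Type*} [CommRing R] (y : R) : R :=
  y * (4 * y - 3) ^ 2

namespace cosSqTriple

theorem three_mul_mul_one_sub {R : Type*} [CommRing R] (y : R) :
    3 * cosSqTriple y * (1 - cosSqTriple y) =
      3 * y * (1 - y) * ((4 * y - 3) * (4 * y - 1)) ^ 2 := by
  unfold cosSqTriple
  ring

theorem sub_eq_mul {R : Type*} [CommRing R] (y z : R) :
    cosSqTriple z - cosSqTriple y =
      (z - y) * ((4 * z + 2 * y - 3) ^ 2 - 4 * (3 * y * (1 - y))) := by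
  unfold cosSqTriple
  ring

variable {F : Type*} [Field F]

theorem isSquare_three_mul_mul_one_sub_iff {y : F} :
    IsSquare (3 * cosSqTriple y * (1 - cosSqTriple y)) ↔ IsSquare (3 * y * (1 - y)) := by
  rw [three_mul_mul_one_sub]
  refine ⟨fun h ↦ ?_, fun h ↦ h.mul (.sq _)⟩
  by_cases hy : (4 * y - 3) * (4 * y - 1) = 0
  · rcases mul_eq_zero.mp hy with hy | hy
    · exact ⟨y, by linear_combination -y * hy⟩
    · exact ⟨3 * y, by linear_combination -3 * y * hy⟩
  · simpa only [mul_div_cancel_right₀ _ (pow_ne_zero 2 hy)] using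
      h.div (.sq ((4 * y - 3) * (4 * y - 1)))

theorem eq_of_not_isSquare (h2 : (2 : F) ≠ 0) {y z : F} (hy : ¬IsSquare (3 * y * (1 - y)))
    (hyz : cosSqTriple z = cosSqTriple y) : z = y := by
  rw [← sub_eq_zero, sub_eq_mul] at hyz
  refine sub_eq_zero.mp ((mul_eq_zero.mp hyz).resolve_right fun hdisc ↦ hy ?_)
  refine ⟨(4 * z + 2 * y - 3) / 2, ?_⟩
  field_simp
  linear_combination -hdisc

theorem exists_ne_of_isSquare (h2 : (2 : F) ≠ 0) (h3 : (3 : F) ≠ 0) {y : F}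
    (hy : IsSquare (3 * y * (1 - y))) : ∃ z ≠ y, cosSqTriple z = cosSqTriple y := by
  obtain ⟨s, hs⟩ := hy
  have h4 : (4 : F) ≠ 0 := by
    simpa only [show (4 : F) = 2 * 2 by norm_num] using mul_ne_zero h2 h2
  have root_of_sq (t : F) (ht : t ^ 2 = 3 * y * (1 - y)) :
      cosSqTriple ((3 - 2 * y + 2 * t) / 4) = cosSqTriple y := by
    rw [← sub_eq_zero, sub_eq_mul, ← ht, mul_div_cancel₀ _ h4]
    ring
  by_cases hz : (3 - 2 * y + 2 * s) / 4 = y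
  · refine ⟨(3 - 2 * y + 2 * -s) / 4, fun hz' ↦ h3 ?_, root_of_sq (-s) (by rw [hs]; ring)⟩
    rw [div_eq_iff h4] at hz hz'
    have s_eq_zero : s = 0 := mul_left_cancel₀ h4 (by linear_combination hz - hz')
    have two_mul_y : 2 * y = 1 :=
      mul_left_cancel₀ (mul_ne_zero h2 h3) (by linear_combination -hz - hz')
    calc
      (3 : F) = 3 * (2 * y) * (2 - 2 * y) := by rw [two_mul_y]; norm_num
      _ = 4 * (3 * y * (1 - y)) := by ring
      _ = 0 := by rw [hs, s_eq_zero]; ring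
  · exact ⟨_, hz, root_of_sq s (by rw [hs, sq])⟩

theorem exists_eq_of_not_isSquare [Finite F] (h2 : (2 : F) ≠ 0) {x : F}
    (hx : ¬IsSquare (3 * x * (1 - x))) : ∃ y, cosSqTriple y = x := by
  let nonsquareLocus := {y : F // ¬IsSquare (3 * y * (1 - y))}
  let tripleRestrict (y : nonsquareLocus) : nonsquareLocus :=
    ⟨cosSqTriple y.1, isSquare_three_mul_mul_one_sub_iff.not.mpr y.2⟩
  have injective : Function.Injective tripleRestrict := fun _ z hyz ↦
    Subtype.ext (eq_of_not_isSquare h2 z.2 (congrArg Subtype.val hyz))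
  obtain ⟨y, hy⟩ := Finite.surjective_of_injective injective ⟨x, hx⟩
  exact ⟨y, congrArg Subtype.val hy⟩

theorem existsUnique_eq_iff [Finite F] (h2 : (2 : F) ≠ 0) (h3 : (3 : F) ≠ 0) {x : F} :
    (∃! y, cosSqTriple y = x) ↔ ¬IsSquare (3 * x * (1 - x)) := by
  constructor
  · rintro ⟨y, rfl, unique⟩ hsq
    rw [isSquare_three_mul_mul_one_sub_iff] at hsq
    obtain ⟨z, hzy, hz⟩ := exists_ne_of_isSquare h2 h3 hsq
    exact hzy (unique z hz)
  · intro hnsq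
    obtain ⟨y, rfl⟩ := exists_eq_of_not_isSquare h2 hnsq
    exact ⟨y, rfl, fun _ ↦ eq_of_not_isSquare h2 (isSquare_three_mul_mul_one_sub_iff.not.mp hnsq)⟩

theorem existsUnique_mul_one_sub_sq_iff (h2 : (2 : F) ≠ 0) (h3 : (3 : F) ≠ 0) {x : F}
    (hx : x ≠ 0) :
    (∃! s : F, s * (1 - s) ^ 2 * (27 / (4 * x)) = 1) ↔ ∃! y, cosSqTriple y = x := by
  have h4 : (4 : F) ≠ 0 := by
    simpa only [show (4 : F) = 2 * 2 by norm_num] using mul_ne_zero h2 h2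
  refine ((Equiv.mulLeft₀ (4 / 3 : F) (div_ne_zero h4 h3)).existsUnique_congr fun y ↦ ?_).symm
  rw [Equiv.mulLeft₀_apply, ← mul_div_assoc, div_eq_one_iff_eq (mul_ne_zero h4 hx),
    ← mul_right_inj' h4]
  refine Eq.congr_left ?_
  unfold cosSqTriple
  field_simp
  ring

end cosSqTriple

theorem stmt_4_general {F K : Type*} [Field F] [Fintype F] [DecidableEq F] [Field K] [CharZero K]
    [HasEnoughRootsOfUnity K (Monoid.exponent Fˣ)] [Fintype (MulChar F K)]
    (h2 : (2 : F) ≠ 0) (h3 : (3 : F) ≠ 0) {ψ : AddChar F K} (hψ : ψ ≠ 1)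
    {x : F} (hx : x ≠ 0) :
    1 / ((Fintype.card F : K) * (Fintype.card F - 1)) *
        ∑ χ : MulChar F K,
          gaussSum χ ψ * gaussSum (χ ^ 2) ψ * gaussSum (χ⁻¹ ^ 3) ψ * χ (-27 / (4 * x)) =
      1 / Fintype.card F ↔ quadraticChar F (3 * x * (1 - x)) = -1 := by
  have ha : -27 / (4 * x) ≠ 0 := by
    rw [show (-27 : F) = -3 ^ 3 by norm_num, show (4 : F) = 2 ^ 2 by norm_num]
    simp [h2, h3, hx]
  have sum_iff := one_div_mul_sum_gaussSum_eq_one_div_card_iff one_ne_zero two_ne_zero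
    (Nat.coprime_one_left 2) hψ ha
  have sign : (-1) ^ (1 + 2) * (-27 / (4 * x)) = 27 / (4 * x) := by ring
  simp only [pow_one, sign, Nat.reduceAdd] at sum_iff
  rw [sum_iff, cosSqTriple.existsUnique_mul_one_sub_sq_iff h2 h3 hx,
    cosSqTriple.existsUnique_eq_iff h2 h3, quadraticChar_neg_one_iff_not_isSquare]

theorem stmt_4 (p r : ℕ) (hp : p.Prime) (hp5 : 5 ≤ p) (hr : 1 ≤ r)
    (F : Type) [Field F] [Fintype F] [DecidableEq F]
    (hF : Fintype.card F = p ^ r)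
    [Fintype (MulChar F ℂ)]
    (ψ : AddChar F ℂ) (hψ : ψ ≠ 1)
    (x : F) (hx0 : x ≠ 0) (hx1 : x ≠ 1) :
    ((1 / ((Fintype.card F : ℂ) * ((Fintype.card F : ℂ) - 1))) *
      ∑ χ : MulChar F ℂ,
        gaussSum χ ψ * gaussSum (χ ^ 2) ψ * gaussSum (χ⁻¹ ^ 3) ψ * χ (-27 / (4 * x))
    = 1 / (Fintype.card F : ℂ)) ↔ quadraticChar F (3 * x * (1 - x)) = -1 := by
  have h2 : (2 : F) ≠ 0 := mod_cast natCast_ne_zero_of_prime_ne hp hF Nat.prime_two (by lia)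
  have h3 : (3 : F) ≠ 0 := mod_cast natCast_ne_zero_of_prime_ne hp hF Nat.prime_three (by lia)
  exact stmt_4_general h2 h3 hψ hx0
end

section
/- Let p be an odd prime and q = p^r with r ≥ 1, and let λ ∈ F_q with λ ≠ 0 and λ ≠ −1. Then (1/(q−1)) · Σ_χ χ(λ⁻¹)·J(χ̄φ, χ)³ = φ(λ+1)·( (Σ_{x ∈ F_q} φ((x−1)(x² − 1/(λ+1))))² − q ), where the first sum runs over all multiplicative characters χ of F_q and the inner sum runs over all x ∈ F_q. -/
/-!
Write `φ` for the quadratic character and `E = ∑ x, φ ((x - 1) * (x ^ 2 - c))`, where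
`c = 1 / (lam + 1)`.

For the left-hand side, `J(χ⁻¹φ, χ) = ∑ t, χ t * φ (1 + t)`, so orthogonality of characters turns
the sum of cubes into `(q - 1) * S`, where `S` is the sum of `φ ((1 + a) * (1 + b) * (1 + t))` over
the surface `a * b * t = lam`.

For the right-hand side, expand `E ^ 2` as a sum over `x` and `y` and replace `y` by
`t = (x * y - c) / (x - y)`, which is the subtraction law of a torus: its norm form `x ^ 2 - c` is
multiplicative, `(x ^ 2 - c) * (y ^ 2 - c) = (x - y) ^ 2 * (t ^ 2 - c)`. For fixed `t` what is left
is the sum of `φ` over a cubic in `x` with rational roots, and this depends only on `t ^ 2`. Summing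
over `s = t ^ 2` with weight `1 + φ s`, the constant part of the weight contributes `1` and the
`φ s` part contributes `φ c * S`; the diagonal `y = x` adds `q - 1`, whence `E ^ 2 = q + φ c * S`.
-/

namespace ClausenSum

open Finset

lemma ringChar_ne_two_of_card_eq_pow {F : Type*} [Field F] [Fintype F] {p r : ℕ} (hp : Odd p)
    (hF : Fintype.card F = p ^ r) : ringChar F ≠ 2 := fun h ↦
  hp.pow.not_two_dvd_nat (hF ▸ Nat.dvd_of_mod_eq_zero (FiniteField.even_card_of_char_two h))

section Reindexing

variable {F M : Type*} [Field F] [Fintype F] [AddCommMonoid M]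

lemma sum_comp_mul_add {a : F} (ha : a ≠ 0) (b : F) (f : F → M) :
    ∑ x, f (a * x + b) = ∑ y, f y :=
  ((Equiv.mulLeft₀ a ha).trans (Equiv.addRight b)).sum_comp f

-- The convention `k / 0 = 0` makes `x ↦ a + k / (x + b)` a permutation: `-b` is sent to `a`.
lemma sum_comp_add_div_add {k : F} (hk : k ≠ 0) (a b : F) (f : F → M) :
    ∑ x, f (a + k / (x + b)) = ∑ y, f y :=
  ((Equiv.addRight b).trans ((Equiv.divLeft₀ k hk).trans (Equiv.addLeft a))).sum_comp f

end Reindexing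

section MulChar

variable {R : Type*} [CommRing R]

lemma sum_mulChar_apply {M : Type*} [CommMonoid M] [Finite M] [DecidableEq M] [IsDomain R]
    [HasEnoughRootsOfUnity R (Monoid.exponent Mˣ)] [Fintype (MulChar M R)] (a : M) :
    ∑ χ : MulChar M R, χ a = if a = 1 then (Nat.card Mˣ : R) else 0 := by
  split_ifs with ha
  · simp [ha, ← MulChar.card_eq_card_units_of_hasEnoughRootsOfUnity M R]
  · obtain ⟨χ, hχ⟩ := MulChar.exists_apply_ne_one_of_hasEnoughRootsOfUnity M R ha
    refine eq_zero_of_mul_eq_self_left hχ ?_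
    simp only [mul_sum, ← MulChar.mul_apply]
    exact Equiv.sum_comp (Equiv.mulLeft χ) fun ψ ↦ ψ a

section Mellin

variable {G : Type*} [CommGroupWithZero G] [Fintype G] [DecidableEq G] [IsDomain R]
  [HasEnoughRootsOfUnity R (Monoid.exponent Gˣ)] [Fintype (MulChar G R)]

lemma sum_mulChar_mul_sum (f : G → R) (m : G) :
    ∑ χ : MulChar G R, χ m * ∑ t, χ t * f t =
      Nat.card Gˣ * if m = 0 then 0 else f m⁻¹ := by
  simp_rw [mul_sum, ← mul_assoc, ← map_mul]
  rw [sum_comm]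
  simp_rw [← sum_mul, sum_mulChar_apply]
  split_ifs with hm
  · simp [hm]
  · simp [mul_eq_one_iff_inv_eq₀ hm]

lemma sum_mulChar_inv_mul_sum_pow_three (f : G → R) {l : G} (hl : l ≠ 0) :
    ∑ χ : MulChar G R, χ l⁻¹ * (∑ t, χ t * f t) ^ 3 =
      Nat.card Gˣ * ∑ a, ∑ b, if a * b = 0 then 0 else f a * f b * f (l / (a * b)) := by
  have expand (χ : MulChar G R) : χ l⁻¹ * (∑ t, χ t * f t) ^ 3 =
      ∑ a, ∑ b, f a * f b * (χ (l⁻¹ * (a * b)) * ∑ t, χ t * f t) := by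
    rw [pow_succ, sq, sum_mul_sum, sum_mul, mul_sum]
    refine sum_congr rfl fun a _ ↦ ?_
    rw [sum_mul, mul_sum]
    refine sum_congr rfl fun b _ ↦ ?_
    simp only [map_mul]
    ring
  simp_rw [expand]
  rw [sum_comm, mul_sum]
  refine sum_congr rfl fun a _ ↦ ?_
  rw [sum_comm, mul_sum]
  refine sum_congr rfl fun b _ ↦ ?_
  rw [← mul_sum, sum_mulChar_mul_sum, mul_left_comm]
  simp [hl, div_eq_mul_inv, mul_comm]

end Mellin

lemma jacobiSum_inv_mul {F : Type*} [Field F] [Fintype F] (χ ψ : MulChar F R) :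
    jacobiSum (χ⁻¹ * ψ) χ = ∑ t, χ t * ψ⁻¹ (1 + t) := by
  rw [jacobiSum, ← sum_comp_add_div_add one_ne_zero 0 1]
  refine sum_congr rfl fun t _ ↦ ?_
  rw [zero_add, one_div, add_comm t]
  by_cases ht : 1 + t = 0
  · simp [ht, MulChar.map_zero]
  · have one_sub_inv : 1 - (1 + t)⁻¹ = t * (1 + t)⁻¹ := by
      field_simp
      ring
    have cancel : χ (1 + t) * χ (1 + t)⁻¹ = 1 := by
      rw [← map_mul, mul_inv_cancel₀ ht, map_one]
    rw [one_sub_inv, map_mul, MulChar.mul_apply, MulChar.inv_apply', MulChar.inv_apply', inv_inv]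
    linear_combination χ t * ψ (1 + t)⁻¹ * cancel

end MulChar

section QuadraticChar

variable {F : Type*} [Field F] [Fintype F] [DecidableEq F]

lemma quadraticChar_sq_mul {k : F} (hk : k ≠ 0) (a : F) :
    quadraticChar F (k ^ 2 * a) = quadraticChar F a := by
  rw [map_mul, quadraticChar_sq_one' hk, one_mul]

lemma sum_comp_sq (hF : ringChar F ≠ 2) (f : F → ℤ) :
    ∑ x, f (x ^ 2) = ∑ s, (1 + quadraticChar F s) * f s := by
  rw [← sum_fiberwise univ (· ^ 2)]
  refine sum_congr rfl fun s _ ↦ ?_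
  rw [sum_congr rfl fun x hx ↦ congrArg f (mem_filter.mp hx).2, sum_const, nsmul_eq_mul, add_comm,
    ← quadraticChar_card_sqrts hF]
  congr 3
  ext x
  simp

lemma sum_quadraticChar_linear (hF : ringChar F ≠ 2) {a : F} (ha : a ≠ 0) (b : F) :
    ∑ x, quadraticChar F (a * x + b) = 0 :=
  (sum_comp_mul_add ha b (quadraticChar F)).trans (quadraticChar_sum_zero hF)

lemma sum_quadraticChar_sq_mul_linear (hF : ringChar F ≠ 2) {a : F} (ha : a ≠ 0) (b : F) :
    ∑ x, quadraticChar F (x ^ 2 * (a * x + b)) = -quadraticChar F b := by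
  have remove_zero (x : F) : quadraticChar F (x ^ 2 * (a * x + b)) =
      quadraticChar F (a * x + b) - if x = 0 then quadraticChar F b else 0 := by
    obtain rfl | hx := eq_or_ne x 0
    · simp
    · rw [quadraticChar_sq_mul hx, if_neg hx, sub_zero]
  simp_rw [remove_zero, sum_sub_distrib, sum_quadraticChar_linear hF ha]
  simp

lemma sum_quadraticChar_mul_linear (hF : ringChar F ≠ 2) (a : F) {b : F} (hb : b ≠ 0) :
    ∑ x, quadraticChar F (x * (a * x + b)) = -quadraticChar F a := by
  rw [← sum_quadraticChar_sq_mul_linear hF hb, ← Equiv.sum_comp (Equiv.inv F)]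
  refine sum_congr rfl fun x _ ↦ ?_
  obtain rfl | hx := eq_or_ne x 0
  · simp
  · rw [← quadraticChar_sq_mul (pow_ne_zero 2 hx), Equiv.inv_apply]
    congr 1
    field_simp
    ring

lemma sum_quadraticChar_sq_sub (hF : ringChar F ≠ 2) {c : F} (hc : c ≠ 0) :
    ∑ t, quadraticChar F (t ^ 2 - c) = -1 := by
  have linear := sum_quadraticChar_linear hF one_ne_zero (-c)
  have quadratic := sum_quadraticChar_mul_linear hF 1 (neg_ne_zero.mpr hc)
  simp only [one_mul, ← sub_eq_add_neg, map_one] at linear quadratic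
  simp_rw [sum_comp_sq hF fun s ↦ quadraticChar F (s - c), one_add_mul, ← map_mul,
    sum_add_distrib, linear, quadratic, zero_add]

/-- The character sum of the elliptic curve `y ^ 2 = x * (x + 1) * (u * x + v)` with rational
2-torsion; the coefficients `u` and `v` may vanish. -/
def cubicSum (u v : F) : ℤ :=
  ∑ x, quadraticChar F (x * (x + 1) * (u * x + v))

lemma cubicSum_mul_mul (k u v : F) :
    cubicSum (k * u) (k * v) = quadraticChar F k * cubicSum u v := by
  simp_rw [cubicSum, mul_sum, ← map_mul]
  exact sum_congr rfl fun x _ ↦ congrArg _ (by ring)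

lemma cubicSum_one_one (hF : ringChar F ≠ 2) : cubicSum (1 : F) 1 = -quadraticChar F (-1) := by
  rw [cubicSum, ← sum_quadraticChar_sq_mul_linear hF one_ne_zero,
    ← sum_comp_mul_add one_ne_zero 1 fun y ↦ quadraticChar F (y ^ 2 * (1 * y + -1))]
  exact sum_congr rfl fun x _ ↦ congrArg _ (by ring)

lemma sum_quadraticChar_mul_cubicSum (hF : ringChar F ≠ 2) {v : F} (hv : v ≠ 0) :
    ∑ u, quadraticChar F u * cubicSum u v = 1 := by
  have sum_over_coefficient (x : F) :
      ∑ u, quadraticChar F (u * (x * (x + 1) * (u * x + v))) =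
        -quadraticChar F (x ^ 2 * (1 * x + 1)) := by
    rw [show x ^ 2 * (1 * x + 1) = x * (x + 1) * x by ring, map_mul _ (x * (x + 1)), ← mul_neg,
      ← sum_quadraticChar_mul_linear hF x hv, mul_sum]
    simp_rw [← map_mul]
    exact sum_congr rfl fun u _ ↦ congrArg _ (by ring)
  simp_rw [cubicSum, mul_sum, ← map_mul]
  rw [sum_comm]
  simp_rw [sum_over_coefficient, sum_neg_distrib, sum_quadraticChar_sq_mul_linear hF one_ne_zero,
    map_one, neg_neg]

-- The substitution `x ↦ -t + (1 + t) / (x + 1)` sends `0` and `∞` to the roots `1` and `-t`; it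
-- degenerates when these collide, at `t = -1`.
lemma sum_quadraticChar_cubic_eq_cubicSum (hF : ringChar F ≠ 2) (t c : F) :
    ∑ x, quadraticChar F ((x - 1) * (x + t) * ((t - 1) * x - (t - c))) =
      cubicSum (t ^ 2 - c) (1 - c) := by
  obtain rfl | ht := eq_or_ne t (-1)
  · have h_two : (-2 : F) ≠ 0 := neg_ne_zero.mpr (Ring.two_ne_zero hF)
    have degenerate : cubicSum ((-1) ^ 2 - c) (1 - c) = -quadraticChar F (c - 1) := by
      rw [show c - 1 = (1 - c) * -1 by ring, map_mul, ← mul_neg, ← cubicSum_one_one hF,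
        ← cubicSum_mul_mul]
      congr 1 <;> ring
    rw [degenerate, ← sum_quadraticChar_sq_mul_linear hF h_two, ← sum_comp_mul_add one_ne_zero 1]
    exact sum_congr rfl fun x _ ↦ congrArg _ (by ring)
  · have ht' : 1 + t ≠ 0 := fun h ↦ ht (eq_neg_of_add_eq_zero_right h)
    rw [← sum_comp_add_div_add ht' (-t) 1]
    refine sum_congr rfl fun x _ ↦ ?_
    by_cases hx : x + 1 = 0
    · simp [hx]
    · rw [← quadraticChar_sq_mul (div_ne_zero ht' (pow_ne_zero 2 hx)) (x * _ * _)]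
      congr 1
      field_simp
      ring

lemma sum_quadraticChar_sq_sub_sq_mul_cubic (hF : ringChar F ≠ 2) {x : F} (hx0 : x ≠ 0)
    (hx1 : x ≠ 1) :
    ∑ t, quadraticChar F (t ^ 2 - x ^ 2) *
      quadraticChar F ((x - 1) * (x + t) * ((t - 1) * x - (t - x ^ 2))) = -1 := by
  rw [← sum_quadraticChar_sq_sub hF (pow_ne_zero 2 hx0)]
  refine sum_congr rfl fun t _ ↦ ?_
  by_cases ht : x + t = 0
  · simp [eq_neg_of_add_eq_zero_right ht]
  · rw [show (x - 1) * (x + t) * ((t - 1) * x - (t - x ^ 2)) = ((x - 1) * (x + t)) ^ 2 by ring,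
      quadraticChar_sq_one' (mul_ne_zero (sub_ne_zero.mpr hx1) ht), mul_one]

-- The first term on the right comes from the diagonal `y = x`, where `t = (x * y - c) / (x - y)` is
-- undefined; the permutation of `F` used below pairs it with `t = -x`.
lemma quadraticChar_mul_sum_eq (hF : ringChar F ≠ 2) {c : F} (hc0 : c ≠ 0) (hc1 : c ≠ 1) (x : F) :
    quadraticChar F ((x - 1) * (x ^ 2 - c)) * ∑ y, quadraticChar F ((y - 1) * (y ^ 2 - c)) =
      quadraticChar F (x - 1) ^ 2 + ∑ t, quadraticChar F (t ^ 2 - c) *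
        quadraticChar F ((x - 1) * (x + t) * ((t - 1) * x - (t - c))) := by
  by_cases hx : x ^ 2 - c = 0
  · obtain rfl : x ^ 2 = c := sub_eq_zero.mp hx
    have hx0 : x ≠ 0 := ne_zero_pow two_ne_zero hc0
    have hx1 : x ≠ 1 := fun h ↦ hc1 (by rw [h, one_pow])
    rw [sum_quadraticChar_sq_sub_sq_mul_cubic hF hx0 hx1,
      quadraticChar_sq_one (sub_ne_zero.mpr hx1), sub_self, mul_zero, MulChar.map_zero, zero_mul,
      add_neg_cancel]
  · have substitute (t : F) : quadraticChar F ((x - 1) * (x ^ 2 - c)) *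
        quadraticChar F ((x + -(x ^ 2 - c) / (t + x) - 1) *
          ((x + -(x ^ 2 - c) / (t + x)) ^ 2 - c)) =
        (if t = -x then quadraticChar F (x - 1) ^ 2 else 0) + quadraticChar F (t ^ 2 - c) *
          quadraticChar F ((x - 1) * (x + t) * ((t - 1) * x - (t - c))) := by
      split_ifs with ht
      · rw [ht, neg_add_cancel, div_zero, add_zero, ← sq, map_mul, mul_pow, quadraticChar_sq_one hx]
        simp
      · have ht' : t + x ≠ 0 := fun h ↦ ht (eq_neg_of_add_eq_zero_left h)
        rw [zero_add, ← map_mul, ← map_mul,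
          ← quadraticChar_sq_mul (div_ne_zero hx (pow_ne_zero 2 ht')) ((t ^ 2 - c) * _)]
        congr 1
        field_simp
        ring
    rw [← sum_comp_add_div_add (neg_ne_zero.mpr hx) x x, mul_sum]
    simp_rw [substitute, sum_add_distrib, sum_ite_eq', mem_univ, if_true]

lemma sum_sq_quadraticChar_sub (a : F) :
    ∑ x, quadraticChar F (x - a) ^ 2 = Fintype.card F - 1 := by
  have remove_root (x : F) : quadraticChar F (x - a) ^ 2 = 1 - if x = a then 1 else 0 := by
    split_ifs with hx
    · simp [hx]
    · rw [quadraticChar_sq_one (sub_ne_zero.mpr hx), sub_zero]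
  simp_rw [remove_root, sum_sub_distrib]
  simp

lemma sq_sum_quadraticChar_eq_sum_cubicSum (hF : ringChar F ≠ 2) {c : F} (hc0 : c ≠ 0)
    (hc1 : c ≠ 1) :
    (∑ x, quadraticChar F ((x - 1) * (x ^ 2 - c))) ^ 2 =
      Fintype.card F + ∑ s, quadraticChar F (s * (s - c)) * cubicSum (s - c) (1 - c) := by
  have cubicSum_total : ∑ s, quadraticChar F (s - c) * cubicSum (s - c) (1 - c) = 1 := by
    rw [← sum_quadraticChar_mul_cubicSum hF (sub_ne_zero.mpr hc1.symm)]
    exact Equiv.sum_comp (Equiv.subRight c) fun u ↦ quadraticChar F u * cubicSum u (1 - c)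
  calc (∑ x, quadraticChar F ((x - 1) * (x ^ 2 - c))) ^ 2
    _ = ∑ x, (quadraticChar F (x - 1) ^ 2 + ∑ t, quadraticChar F (t ^ 2 - c) *
          quadraticChar F ((x - 1) * (x + t) * ((t - 1) * x - (t - c)))) := by
      simp_rw [← quadraticChar_mul_sum_eq hF hc0 hc1, ← sum_mul, sq]
    _ = Fintype.card F - 1 + ∑ t, quadraticChar F (t ^ 2 - c) * cubicSum (t ^ 2 - c) (1 - c) := by
      rw [sum_add_distrib, sum_sq_quadraticChar_sub, sum_comm]
      simp_rw [← mul_sum, sum_quadraticChar_cubic_eq_cubicSum hF]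
    _ = Fintype.card F + ∑ s, quadraticChar F (s * (s - c)) * cubicSum (s - c) (1 - c) := by
      rw [sum_comp_sq hF fun s ↦ quadraticChar F (s - c) * cubicSum (s - c) (1 - c)]
      simp_rw [one_add_mul, sum_add_distrib, cubicSum_total, ← mul_assoc, ← map_mul]
      ring

/-- The sum of `φ ((1 + a) * (1 + b) * (1 + t))` over the surface `a * b * t = l`, with
`t = l / (a * b)` eliminated; for `l ≠ 0` the vanishing of `φ` at `0` discards `a * b = 0`. -/
def surfaceSum (l : F) : ℤ :=
  ∑ a, ∑ b, quadraticChar F ((1 + a) * (1 + b) * (a * b * (a * b + l)))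

-- A finite-field form of Clausen's formula `₂F₁ ^ 2 = ₃F₂`.
lemma clausen_formula (hF : ringChar F ≠ 2) {l : F} (hl0 : l ≠ 0) (hl1 : l ≠ -1) :
    quadraticChar F (l + 1) *
        ((∑ x, quadraticChar F ((x - 1) * (x ^ 2 - 1 / (l + 1)))) ^ 2 - Fintype.card F) =
      surfaceSum l := by
  have hl : l + 1 ≠ 0 := fun h ↦ hl1 (eq_neg_of_add_eq_zero_left h)
  set c := 1 / (l + 1) with hc
  have hc0 : c ≠ 0 := one_div_ne_zero hl
  have hc1 : c ≠ 1 := by simpa [hc, hl] using hl0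
  have one_sub : 1 - c = c * l := by
    rw [hc]
    field_simp
    ring
  have scale (a : F) : quadraticChar F (l + 1) * (quadraticChar F ((c * a + c) * (c * a + c - c)) *
      cubicSum (c * a + c - c) (1 - c)) =
        ∑ b, quadraticChar F ((1 + a) * (1 + b) * (a * b * (a * b + l))) := by
    rw [one_sub, add_sub_cancel_right, cubicSum_mul_mul, cubicSum]
    simp_rw [mul_sum, ← map_mul]
    refine sum_congr rfl fun b _ ↦ ?_
    rw [← quadraticChar_sq_mul hc0 ((1 + a) * _ * _)]
    congr 1
    rw [hc]
    field_simp
    ring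
  rw [sq_sum_quadraticChar_eq_sum_cubicSum hF hc0 hc1, add_sub_cancel_left,
    ← sum_comp_mul_add hc0 c, mul_sum, surfaceSum]
  exact sum_congr rfl fun a _ ↦ scale a

end QuadraticChar

lemma sum_mulChar_mul_jacobiSum_pow_three {F R : Type*} [Field F] [Fintype F] [DecidableEq F]
    [CommRing R] [IsDomain R] [HasEnoughRootsOfUnity R (Monoid.exponent Fˣ)]
    [Fintype (MulChar F R)] {l : F} (hl : l ≠ 0) :
    ∑ χ : MulChar F R, χ l⁻¹ *
        jacobiSum (χ⁻¹ * (quadraticChar F).ringHomComp (Int.castRingHom R)) χ ^ 3 =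
      ((Fintype.card F : R) - 1) * surfaceSum l := by
  set ψ := (quadraticChar F).ringHomComp (Int.castRingHom R)
  have ψ_inv : ψ⁻¹ = ψ := ((quadraticChar_isQuadratic F).comp _).inv
  have eliminate (a b : F) :
      (if a * b = 0 then 0 else ψ (1 + a) * ψ (1 + b) * ψ (1 + l / (a * b))) =
        ψ ((1 + a) * (1 + b) * (a * b * (a * b + l))) := by
    split_ifs with hab
    · simp [hab, MulChar.map_zero]
    · have factor_sq : a * b * (a * b + l) = (a * b) ^ 2 * (1 + l / (a * b)) := by
        linear_combination -(a * b) * div_mul_cancel₀ l hab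
      have ψ_sq_mul : ψ ((a * b) ^ 2 * (1 + l / (a * b))) = ψ (1 + l / (a * b)) :=
        congrArg (Int.cast : ℤ → R) (quadraticChar_sq_mul hab _)
      rw [factor_sq, map_mul, map_mul, ψ_sq_mul]
  have card_units : (Nat.card Fˣ : R) = Fintype.card F - 1 := by
    rw [Nat.card_units, Nat.card_eq_fintype_card, Nat.cast_sub Fintype.card_pos, Nat.cast_one]
  simp_rw [jacobiSum_inv_mul, ψ_inv]
  rw [sum_mulChar_inv_mul_sum_pow_three (fun t ↦ ψ (1 + t)) hl, card_units, surfaceSum]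
  push_cast
  simp_rw [eliminate]
  rfl

end ClausenSum

open ClausenSum in
theorem stmt_9_general {F R : Type*} [Field F] [Fintype F] [DecidableEq F] (hF : ringChar F ≠ 2)
    [CommRing R] [IsDomain R] [HasEnoughRootsOfUnity R (Monoid.exponent Fˣ)]
    [Fintype (MulChar F R)] {lam : F} (hlam0 : lam ≠ 0) (hlam1 : lam ≠ -1) :
    ∑ χ : MulChar F R, χ lam⁻¹ *
        jacobiSum (χ⁻¹ * (quadraticChar F).ringHomComp (Int.castRingHom R)) χ ^ 3 =
      ((Fintype.card F : R) - 1) * ((quadraticChar F (lam + 1) : ℤ) *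
        ((∑ x : F, ((quadraticChar F ((x - 1) * (x ^ 2 - 1 / (lam + 1))) : ℤ) : R)) ^ 2 -
          Fintype.card F)) := by
  rw [sum_mulChar_mul_jacobiSum_pow_three hlam0, ← clausen_formula hF hlam0 hlam1]
  push_cast
  rfl

theorem stmt_9 (p r : ℕ) (hp : p.Prime) (hp2 : p ≠ 2) (hr : 1 ≤ r)
    (F : Type) [Field F] [Fintype F] [DecidableEq F]
    (hF : Fintype.card F = p ^ r)
    [Fintype (MulChar F ℂ)]
    (lam : F) (hlam0 : lam ≠ 0) (hlam1 : lam ≠ -1) :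
    (1 / ((Fintype.card F : ℂ) - 1)) *
      ∑ χ : MulChar F ℂ,
        χ lam⁻¹ *
          (jacobiSum (χ⁻¹ * (quadraticChar F).ringHomComp (Int.castRingHom ℂ)) χ) ^ 3
    = ((quadraticChar F (lam + 1) : ℤ) : ℂ) *
        ((∑ x : F,
            ((quadraticChar F ((x - 1) * (x ^ 2 - 1 / (lam + 1))) : ℤ) : ℂ)) ^ 2
          - (Fintype.card F : ℂ)) := by
  have char_ne_two := ClausenSum.ringChar_ne_two_of_card_eq_pow (hp.odd_of_ne_two hp2) hF
  rw [stmt_9_general char_ne_two hlam0 hlam1, one_div,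
    inv_mul_cancel_left₀ (sub_ne_zero.mpr (mod_cast Fintype.one_lt_card.ne'))]
end
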